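/- Let λ_s < 0 < λ_u, set μ := λ_u − λ_s, let ε, S ≥ 0, and let σ : ℝ → ℝ be continuous with |σ(τ)| ≤ εS for all τ ∈ ℝ. Define θ⋆(t,T) := e^{−μt} ∫_{−T}^t e^{μτ} σ(τ) dτ and θ(t) := e^{−μt} ∫_{−∞}^t e^{μτ} σ(τ) dτ. Then for every t ≥ −T, |θ⋆(t,T) − θ(t)| ≤ (εS/(λ_u − λ_s)) · e^{(λ_s − λ_u)(t+T)}. -/

import Mathlib

/-- Unstable-manifold part of the finite-time error estimate (eq:finitebound):
with eigenvalue gap `μ = λ_u − λ_s > 0` and shear `σ` bounded by `εS`, the clipped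
rotation angle `θ⋆(t,T)` differs from the infinite-time rotation angle `θ(t)` by at
most `(εS/(λ_u − λ_s)) e^{(λ_s−λ_u)(t+T)}` for `t ≥ −T`. -/
theorem finite_time_rotation_error_unstable
    (ls lu ε S : ℝ) (hls : ls < 0) (hlu : 0 < lu) (hε : 0 ≤ ε) (hS : 0 ≤ S)
    (σ : ℝ → ℝ) (hσ : Continuous σ) (hb : ∀ τ : ℝ, |σ τ| ≤ ε * S)
    (T : ℝ) :
    ∀ t : ℝ, -T ≤ t →
      |(Real.exp (-(lu - ls) * t) * ∫ τ in (-T)..t, Real.exp ((lu - ls) * τ) * σ τ)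
        - (Real.exp (-(lu - ls) * t) *
            ∫ τ in Set.Iio t, Real.exp ((lu - ls) * τ) * σ τ)|
      ≤ ε * S / (lu - ls) * Real.exp ((ls - lu) * (t + T)) := by
  intro t _
  have hμ : 0 < lu - ls := by linarith
  have hg : ∀ c : ℝ, MeasureTheory.IntegrableOn
      (fun τ : ℝ => Real.exp ((lu - ls) * τ) * (ε * S)) (Set.Iic c) := fun c =>
    MeasureTheory.Integrable.mul_const (integrableOn_exp_mul_Iic hμ c) _
  have hle : ∀ τ : ℝ, ‖Real.exp ((lu - ls) * τ) * σ τ‖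
      ≤ Real.exp ((lu - ls) * τ) * (ε * S) := by
    intro τ
    rw [norm_mul, Real.norm_eq_abs, Real.norm_eq_abs, Real.abs_exp]
    exact mul_le_mul_of_nonneg_left (hb τ) (Real.exp_pos _).le
  have hf : ∀ c : ℝ, MeasureTheory.IntegrableOn
      (fun τ : ℝ => Real.exp ((lu - ls) * τ) * σ τ) (Set.Iic c) := fun c =>
    MeasureTheory.Integrable.mono' (hg c)
      (by
        have : Continuous (fun τ : ℝ => Real.exp ((lu - ls) * τ) * σ τ) := by fun_prop
        exact this.aestronglyMeasurable)
      (Filter.Eventually.of_forall hle)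
  have key := MeasureTheory.norm_integral_le_of_norm_le (hg (-T))
    (Filter.Eventually.of_forall hle)
  rw [MeasureTheory.integral_mul_const, integral_exp_mul_Iic hμ, Real.norm_eq_abs] at key
  rw [← MeasureTheory.integral_Iic_eq_integral_Iio,
    ← intervalIntegral.integral_Iic_sub_Iic (hf (-T)) (hf t), ← mul_sub, sub_sub_cancel_left,
    abs_mul, Real.abs_exp, abs_neg]
  refine (mul_le_mul_of_nonneg_left key (Real.exp_pos _).le).trans (le_of_eq ?_)
  have : Real.exp ((ls - lu) * (t + T))
      = Real.exp (-(lu - ls) * t) * Real.exp ((lu - ls) * -T) := by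
    rw [← Real.exp_add]; congr 1; ring
  rw [this]; ring
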